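/- arXiv:2404.12568 — 2 statements merged into one kernel-verified Lean document; each statement's English description precedes it below -/
import Mathlib

section
/- Assume (σ_min + σ_min,m+1)/2 < τ < (σ_max + σ_max,m+1)/2, τ ≠ σᵢ for all 1 ≤ i ≤ N, and δ < d_{m+1} where d_{m+1} = min_{m<i≤N} |σᵢ − τ|, and let r ∈ ℝ^{M+N} satisfy Π̃_m r = r. Then for every j ∈ ℕ there exists w ∈ K_j(B̃_m, r) such that ‖B̃_m w + r‖ ≤ 2 · (1 − 2/(1 + (σ_max + τ + δ)/(d_{m+1} − δ)))^{⌊j/2⌋} · ‖r‖, where ⌊·⌋ denotes the integer part. -/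
open Matrix

noncomputable def vnorm {ι : Type*} [Fintype ι] (x : ι → ℝ) : ℝ :=
  Real.sqrt (∑ i, x i ^ 2)

noncomputable def specNorm {ι κ : Type*} [Fintype ι] [Fintype κ] [DecidableEq κ]
    (A : Matrix ι κ ℝ) : ℝ :=
  ‖LinearMap.toContinuousLinearMap (Matrix.toEuclideanLin A)‖

noncomputable def Krylov {ι : Type*} [Fintype ι] [DecidableEq ι]
    (B : Matrix ι ι ℝ) (r : ι → ℝ) (j : ℕ) : Submodule ℝ (ι → ℝ) :=
  Submodule.span ℝ {x | ∃ i < j, x = (B ^ i) *ᵥ r}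

/-!
The preconditioned operator is the compression of `jordanWielandt A - τ` to the complement of the
approximate singular subspaces. Compressed to the complement of the exact ones, it is bounded below
by `d`, the distance from `τ` to the remaining singular values, since left and right singular
vectors for `σ` only produce the eigenvalues `±σ - τ` and in the interior case `d ≤ τ`, which also
covers the kernel of `Aᵀ`. The direct rotation takes the exact complement to the approximate one and
commutes past the scalar `τ`, so up to this orthogonal conjugation the two compressions differ by
the Jordan–Wielandt matrix of some `E`. As `A` intertwines the exact projections, the terms of `E`
of first order in the angles vanish, and `‖E‖ ≤ δ`. On the approximate complement the spectrum
therefore lies in `[-b, -a] ∪ [a, b]` with `a = d - δ` and `b = σmax + τ + δ`, where a Chebyshev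
polynomial of degree `⌊j / 2⌋` in `t ^ 2` is a residual polynomial with the claimed decay.
-/

section Norms

open scoped Matrix.Norms.L2Operator

variable {ι κ : Type*} [Fintype ι] [Fintype κ]

lemma vnorm_eq_norm_toLp (x : ι → ℝ) : vnorm x = ‖WithLp.toLp 2 x‖ := by
  simp only [vnorm, EuclideanSpace.norm_eq, Real.norm_eq_abs, sq_abs]

lemma vnorm_nonneg (x : ι → ℝ) : 0 ≤ vnorm x := Real.sqrt_nonneg _

lemma vnorm_sq (x : ι → ℝ) : vnorm x ^ 2 = ∑ i, x i ^ 2 :=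
  Real.sq_sqrt (Finset.sum_nonneg fun _ _ ↦ sq_nonneg _)

lemma vnorm_sq_eq_dotProduct (x : ι → ℝ) : vnorm x ^ 2 = x ⬝ᵥ x := by
  rw [vnorm_sq]
  exact Finset.sum_congr rfl fun i _ ↦ sq (x i)

lemma vnorm_pos {x : ι → ℝ} (hx : x ≠ 0) : 0 < vnorm x := by
  rw [vnorm_eq_norm_toLp, norm_pos_iff]
  exact fun h ↦ hx (congrArg WithLp.ofLp h)

lemma vnorm_smul (c : ℝ) (x : ι → ℝ) : vnorm (c • x) = |c| * vnorm x := by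
  rw [vnorm_eq_norm_toLp, WithLp.toLp_smul, norm_smul, Real.norm_eq_abs, vnorm_eq_norm_toLp]

lemma vnorm_sub_le_vnorm_add (x y : ι → ℝ) : vnorm x - vnorm y ≤ vnorm (x + y) := by
  simp only [vnorm_eq_norm_toLp, WithLp.toLp_add]
  exact norm_sub_le_norm_add _ _

lemma vnorm_sumElim_sq (u : ι → ℝ) (v : κ → ℝ) :
    vnorm (Sum.elim u v) ^ 2 = vnorm u ^ 2 + vnorm v ^ 2 := by
  simp only [vnorm_sq, Fintype.sum_sum_type, Sum.elim_inl, Sum.elim_inr]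

lemma vnorm_mulVec_le [DecidableEq κ] (A : Matrix ι κ ℝ) (x : κ → ℝ) :
    vnorm (A *ᵥ x) ≤ ‖A‖ * vnorm x := by
  rw [vnorm_eq_norm_toLp, vnorm_eq_norm_toLp]
  exact A.l2_opNorm_mulVec (WithLp.toLp 2 x)

lemma l2_opNorm_le_of_forall [DecidableEq κ] {A : Matrix ι κ ℝ} {c : ℝ} (hc : 0 ≤ c)
    (h : ∀ x, vnorm (A *ᵥ x) ≤ c * vnorm x) : ‖A‖ ≤ c :=
  ContinuousLinearMap.opNorm_le_bound _ hc fun x ↦ by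
    have hx := h x.ofLp
    rwa [vnorm_eq_norm_toLp, vnorm_eq_norm_toLp] at hx

lemma specNorm_eq_norm [DecidableEq κ] (A : Matrix ι κ ℝ) : specNorm A = ‖A‖ := rfl

lemma l2_opNorm_transpose [DecidableEq ι] [DecidableEq κ] (A : Matrix ι κ ℝ) : ‖Aᵀ‖ = ‖A‖ := by
  rw [← conjTranspose_eq_transpose_of_trivial, l2_opNorm_conjTranspose]

lemma l2_opNorm_transpose_mul_self [DecidableEq κ] (A : Matrix ι κ ℝ) :
    ‖Aᵀ * A‖ = ‖A‖ ^ 2 := by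
  rw [← conjTranspose_eq_transpose_of_trivial, l2_opNorm_conjTranspose_mul_self, sq]

lemma vnorm_mulVec_of_transpose_mul_self [DecidableEq κ] {W : Matrix ι κ ℝ} (hW : Wᵀ * W = 1)
    (x : κ → ℝ) : vnorm (W *ᵥ x) = vnorm x := by
  rw [← sq_eq_sq₀ (vnorm_nonneg _) (vnorm_nonneg _), vnorm_sq_eq_dotProduct,
    vnorm_sq_eq_dotProduct, dotProduct_mulVec, ← mulVec_transpose, mulVec_mulVec, hW, one_mulVec]

lemma l2_opNorm_le_one_of_transpose_mul_self [DecidableEq κ] {W : Matrix ι κ ℝ}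
    (hW : Wᵀ * W = 1) : ‖W‖ ≤ 1 :=
  l2_opNorm_le_of_forall zero_le_one fun x ↦ by
    rw [vnorm_mulVec_of_transpose_mul_self hW, one_mul]

end Norms

section Gap

open scoped Matrix.Norms.L2Operator

variable {n k : Type*}

lemma transpose_eq_self_of_isStarProjection [Fintype n] {P : Matrix n n ℝ}
    (hP : IsStarProjection P) : Pᵀ = P := by
  rw [← conjTranspose_eq_transpose_of_trivial]
  exact hP.isSelfAdjoint

lemma isSelfAdjoint_of_transpose_eq {H : Matrix n n ℝ} (hH : Hᵀ = H) : IsSelfAdjoint H := by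
  rwa [IsSelfAdjoint, star_eq_conjTranspose, conjTranspose_eq_transpose_of_trivial]

variable [Fintype n] [DecidableEq n] [Fintype k] [DecidableEq k]

lemma vnorm_sq_mulVec_add_vnorm_sq_one_sub_mulVec {P : Matrix n n ℝ} (hP : IsStarProjection P)
    (x : n → ℝ) : vnorm (P *ᵥ x) ^ 2 + vnorm ((1 - P) *ᵥ x) ^ 2 = vnorm x ^ 2 := by
  have h : (P *ᵥ x) ⬝ᵥ (P *ᵥ x) = x ⬝ᵥ (P *ᵥ x) := by
    rw [dotProduct_mulVec, ← mulVec_transpose, transpose_eq_self_of_isStarProjection hP,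
      mulVec_mulVec, hP.isIdempotentElem.eq, dotProduct_comm]
  simp only [vnorm_sq_eq_dotProduct, sub_mulVec, one_mulVec, dotProduct_sub, sub_dotProduct, h,
    dotProduct_comm (P *ᵥ x) x]
  ring

lemma isStarProjection_one_sub_mul_transpose {X : Matrix n k ℝ} (hX : Xᵀ * X = 1) :
    IsStarProjection (1 - X * Xᵀ) := by
  refine IsStarProjection.one_sub ⟨?_, isSelfAdjoint_of_transpose_eq ?_⟩
  · rw [IsIdempotentElem, Matrix.mul_assoc, ← Matrix.mul_assoc Xᵀ, hX, Matrix.one_mul]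
  · rw [transpose_mul, transpose_transpose]

lemma norm_sub_le_of_isStarProjection {P Q : Matrix n n ℝ} (hP : IsStarProjection P)
    (hQ : IsStarProjection Q) {s : ℝ} (h₁ : ‖P * (1 - Q)‖ ≤ s) (h₂ : ‖(1 - P) * Q‖ ≤ s) :
    ‖P - Q‖ ≤ s := by
  have hs : 0 ≤ s := (norm_nonneg _).trans h₁
  have hP' := hP.isIdempotentElem
  have hQ' := hQ.isIdempotentElem
  have hPQ : P * (P - Q) = P * (1 - Q) * (1 - Q) := by
    rw [mul_assoc, hQ'.one_sub.eq, mul_sub, mul_sub, hP'.eq, mul_one]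
  have hPQ' : (1 - P) * (P - Q) = -((1 - P) * Q) * Q := by
    rw [neg_mul, mul_assoc, hQ'.eq, mul_sub, hP'.one_sub_mul_self, zero_sub]
  have hle {T : Matrix n n ℝ} (hT : ‖T‖ ≤ s) (y : n → ℝ) :
      vnorm (T *ᵥ y) ^ 2 ≤ s ^ 2 * vnorm y ^ 2 := by
    rw [← mul_pow]
    exact pow_le_pow_left₀ (vnorm_nonneg _)
      ((vnorm_mulVec_le T y).trans (mul_le_mul_of_nonneg_right hT (vnorm_nonneg y))) 2
  refine l2_opNorm_le_of_forall hs fun x ↦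
    le_of_sq_le_sq ?_ (mul_nonneg hs (vnorm_nonneg x))
  calc vnorm ((P - Q) *ᵥ x) ^ 2
      = vnorm ((P * (1 - Q)) *ᵥ ((1 - Q) *ᵥ x)) ^ 2 + vnorm (-((1 - P) * Q) *ᵥ (Q *ᵥ x)) ^ 2 := by
        simp only [← vnorm_sq_mulVec_add_vnorm_sq_one_sub_mulVec hP ((P - Q) *ᵥ x),
          mulVec_mulVec, hPQ, hPQ']
    _ ≤ s ^ 2 * vnorm ((1 - Q) *ᵥ x) ^ 2 + s ^ 2 * vnorm (Q *ᵥ x) ^ 2 :=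
        add_le_add (hle h₁ _) (hle ((norm_neg _).trans_le h₂) _)
    _ = (s * vnorm x) ^ 2 := by
        rw [mul_pow, ← vnorm_sq_mulVec_add_vnorm_sq_one_sub_mulVec hQ x]
        ring

lemma l2_opNorm_one_sub_mul_transpose_comm (C : Matrix n n ℝ) :
    ‖1 - C * Cᵀ‖ = ‖1 - Cᵀ * C‖ := by
  have hsa (B : Matrix n n ℝ) : IsSelfAdjoint (B * Bᵀ) :=
    isSelfAdjoint_of_transpose_eq (by rw [transpose_mul, transpose_transpose])
  have hcfc (B : Matrix n n ℝ) : 1 - B * Bᵀ = cfc (fun x : ℝ ↦ 1 - x) (B * Bᵀ) := by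
    have := hsa B
    rw [cfc_sub .., cfc_const_one ℝ (B * Bᵀ), cfc_id' ℝ (B * Bᵀ)]
  have hspec (B : Matrix n n ℝ) : spectrum ℝ (B * Bᵀ) = spectrum ℝ (Bᵀ * B) := by
    ext x
    rw [mem_spectrum_iff_isRoot_charpoly, mem_spectrum_iff_isRoot_charpoly, charpoly_mul_comm]
  have hle (B : Matrix n n ℝ) : ‖1 - B * Bᵀ‖ ≤ ‖1 - Bᵀ * B‖ := by
    have hB' := hcfc Bᵀ
    have hsa' := hsa Bᵀ
    rw [transpose_transpose] at hB' hsa'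
    rw [hcfc, hB', norm_cfc_le_iff _ _ (norm_nonneg _), hspec]
    exact (norm_cfc_le_iff (fun x : ℝ ↦ 1 - x) (Bᵀ * B) (norm_nonneg _)).1 le_rfl
  exact (hle C).antisymm (by simpa only [transpose_transpose] using hle Cᵀ)

variable {X Y : Matrix n k ℝ}

lemma l2_opNorm_one_sub_mul_transpose_mul_sq (hX : Xᵀ * X = 1) (hY : Yᵀ * Y = 1) :
    ‖(1 - X * Xᵀ) * Y‖ ^ 2 = ‖1 - (Xᵀ * Y)ᵀ * (Xᵀ * Y)‖ := by
  have hP := isStarProjection_one_sub_mul_transpose hX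
  rw [← l2_opNorm_transpose_mul_self, transpose_mul, transpose_eq_self_of_isStarProjection hP,
    Matrix.mul_assoc, ← Matrix.mul_assoc (1 - _), hP.isIdempotentElem.eq, Matrix.sub_mul,
    Matrix.mul_sub, Matrix.one_mul, hY, transpose_mul, transpose_transpose]
  simp only [Matrix.mul_assoc]

lemma l2_opNorm_one_sub_mul_transpose_mul_comm (hX : Xᵀ * X = 1) (hY : Yᵀ * Y = 1) :
    ‖(1 - X * Xᵀ) * Y‖ = ‖(1 - Y * Yᵀ) * X‖ := by
  rw [← sq_eq_sq₀ (norm_nonneg _) (norm_nonneg _), l2_opNorm_one_sub_mul_transpose_mul_sq hX hY,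
    l2_opNorm_one_sub_mul_transpose_mul_sq hY hX, ← l2_opNorm_one_sub_mul_transpose_comm,
    transpose_mul, transpose_mul, transpose_transpose, transpose_transpose]

lemma norm_one_sub_mul_transpose_sub_le (hX : Xᵀ * X = 1) (hY : Yᵀ * Y = 1) :
    ‖(1 - X * Xᵀ) - (1 - Y * Yᵀ)‖ ≤ ‖(1 - X * Xᵀ) * Y‖ := by
  have hmul_transpose (Z : Matrix n k ℝ) (hZ : Zᵀ * Z = 1) (T : Matrix n n ℝ) :
      ‖T * (Z * Zᵀ)‖ ≤ ‖T * Z‖ := by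
    rw [← Matrix.mul_assoc]
    refine (l2_opNorm_mul _ _).trans (mul_le_of_le_one_right (norm_nonneg _) ?_)
    exact (l2_opNorm_transpose Z).trans_le (l2_opNorm_le_one_of_transpose_mul_self hZ)
  have hQ := isStarProjection_one_sub_mul_transpose hY
  refine norm_sub_le_of_isStarProjection (isStarProjection_one_sub_mul_transpose hX) hQ ?_ ?_
  · rw [sub_sub_cancel]
    exact hmul_transpose Y hY _
  · rw [sub_sub_cancel, ← l2_opNorm_transpose, transpose_mul,
      transpose_eq_self_of_isStarProjection hQ, transpose_mul, transpose_transpose,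
      l2_opNorm_one_sub_mul_transpose_mul_comm hX hY]
    exact hmul_transpose X hX _

end Gap

section ProjectionAlgebra

variable {R : Type*} [Ring R] {p q : R}

lemma commute_sub_sq_of_isIdempotentElem (hp : IsIdempotentElem p) (hq : IsIdempotentElem q) :
    Commute ((p - q) ^ 2) p ∧ Commute ((p - q) ^ 2) q := by
  have hpp (x : R) : p * (p * x) = p * x := by rw [← mul_assoc, hp.eq]
  have hqq (x : R) : q * (q * x) = q * x := by rw [← mul_assoc, hq.eq]
  constructor <;>
    simp only [commute_iff_eq, sq, mul_sub, sub_mul, mul_assoc, hp.eq, hq.eq, hpp, hqq] <;> abel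

lemma one_sub_sub_sq_eq_mul (hp : IsIdempotentElem p) (hq : IsIdempotentElem q) :
    (q * p + (1 - q) * (1 - p)) * (p * q + (1 - p) * (1 - q)) = 1 - (p - q) ^ 2 := by
  have hpp (x : R) : p * (p * x) = p * x := by rw [← mul_assoc, hp.eq]
  simp only [sq, mul_sub, sub_mul, mul_add, add_mul, mul_one, one_mul, hp.eq, hq.eq, mul_assoc, hpp]
  abel

end ProjectionAlgebra

section DirectRotation

variable {R : Type*} [NormedRing R] [StarRing R] [NormedAlgebra ℝ R]
  [IsometricContinuousFunctionalCalculus ℝ R IsSelfAdjoint] {a p q : R}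

lemma spectrum_sq_subset_Icc (ha : IsSelfAdjoint a) :
    spectrum ℝ (a ^ 2) ⊆ Set.Icc 0 (‖a‖ ^ 2) := by
  rw [← cfc_pow_id (R := ℝ) a 2, cfc_map_spectrum (R := ℝ) (fun x ↦ x ^ 2) a]
  rintro _ ⟨x, hx, rfl⟩
  have hxa := IsometricContinuousFunctionalCalculus.norm_spectrum_le a hx ha
  exact ⟨sq_nonneg x, sq_le_sq.2 (hxa.trans (le_abs_self _))⟩

lemma continuousOn_inv_sqrt_one_sub : ContinuousOn (fun x : ℝ ↦ (√(1 - x))⁻¹) (Set.Iio 1) :=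
  ContinuousOn.inv₀ (by fun_prop) fun _ hx ↦ (Real.sqrt_pos.2 (sub_pos.2 hx)).ne'

lemma cfc_inv_sqrt_one_sub_sq_mul_one_sub (ha : IsSelfAdjoint a)
    (hspec : spectrum ℝ a ⊆ Set.Iio 1) :
    cfc (fun x : ℝ ↦ (√(1 - x))⁻¹) a ^ 2 * (1 - a) = 1 := by
  have hcont := continuousOn_inv_sqrt_one_sub.mono hspec
  have hone_sub : 1 - a = cfc (fun x : ℝ ↦ 1 - x) a := by
    rw [cfc_sub .., cfc_const_one ℝ a, cfc_id' ℝ a]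
  rw [hone_sub, ← cfc_pow .., ← cfc_mul .., ← cfc_const_one ℝ a]
  refine cfc_congr fun x hx ↦ ?_
  have hx1 : 0 < 1 - x := sub_pos.2 (hspec hx)
  simp only [inv_pow, Real.sq_sqrt hx1.le, inv_mul_cancel₀ hx1.ne']

lemma cfc_sqrt_one_sub_mul_cfc_inv_sqrt_one_sub (ha : IsSelfAdjoint a)
    (hspec : spectrum ℝ a ⊆ Set.Iio 1) :
    cfc (fun x : ℝ ↦ √(1 - x)) a * cfc (fun x : ℝ ↦ (√(1 - x))⁻¹) a = 1 := by
  have hcont := continuousOn_inv_sqrt_one_sub.mono hspec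
  rw [← cfc_mul .., ← cfc_const_one ℝ a]
  exact cfc_congr fun x hx ↦ mul_inv_cancel₀ (Real.sqrt_pos.2 (sub_pos.2 (hspec hx))).ne'

lemma norm_cfc_sqrt_one_sub_sub_one_le (ha : IsSelfAdjoint a) {c : ℝ} (hc : c ≤ 1)
    (hspec : spectrum ℝ a ⊆ Set.Icc 0 c) (hc0 : 0 ≤ c) :
    ‖cfc (fun x : ℝ ↦ √(1 - x)) a - 1‖ ≤ c := by
  rw [← cfc_const_one ℝ a, ← cfc_sub ..]
  refine norm_cfc_le hc0 fun x hx ↦ ?_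
  obtain ⟨hx0, hxc⟩ := hspec hx
  have hsqrt_le : √(1 - x) ≤ 1 := Real.sqrt_le_one.2 (by linarith)
  have hle_sqrt : 1 - x ≤ √(1 - x) := Real.le_sqrt_of_sq_le (by nlinarith)
  rw [Real.norm_eq_abs, abs_le]
  constructor <;> linarith

/-- The direct rotation (Sz.-Nagy, Kato, Davis–Kahan) carrying the range of the orthogonal
projection `q` onto that of `p`, for `‖p - q‖ < 1`: the unitary part of
`p * q + (1 - p) * (1 - q)`, whose modulus is `√(1 - (p - q) ^ 2)`. -/
noncomputable def directRotation (p q : R) : R :=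
  cfc (fun x : ℝ ↦ (√(1 - x))⁻¹) ((p - q) ^ 2) * (p * q + (1 - p) * (1 - q))

lemma commute_cfc_sub_sq (hp : IsIdempotentElem p) (hq : IsIdempotentElem q) (f : ℝ → ℝ) :
    Commute (cfc f ((p - q) ^ 2)) p ∧ Commute (cfc f ((p - q) ^ 2)) q :=
  (commute_sub_sq_of_isIdempotentElem hp hq).imp (·.cfc_real f) (·.cfc_real f)

lemma directRotation_mul (p : R) (hq : IsIdempotentElem q) :
    directRotation p q * q = cfc (fun x : ℝ ↦ (√(1 - x))⁻¹) ((p - q) ^ 2) * (p * q) := by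
  rw [directRotation, mul_assoc, add_mul, mul_assoc p, hq.eq, mul_assoc (1 - p),
    hq.one_sub_mul_self, mul_zero, add_zero]

lemma mul_directRotation (hp : IsIdempotentElem p) (hq : IsIdempotentElem q) :
    p * directRotation p q = directRotation p q * q := by
  rw [directRotation_mul p hq, directRotation, ← mul_assoc, ← (commute_cfc_sub_sq hp hq _).1.eq,
    mul_assoc, mul_add, ← mul_assoc p p, hp.eq, ← mul_assoc p (1 - p), hp.mul_one_sub_self,
    zero_mul, add_zero]

lemma spectrum_sub_sq_subset_Iio (hp : IsSelfAdjoint p) (hq : IsSelfAdjoint q)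
    (hpq : ‖p - q‖ < 1) : spectrum ℝ ((p - q) ^ 2) ⊆ Set.Iio 1 :=
  (spectrum_sq_subset_Icc (hp.sub hq)).trans fun _ hx ↦
    hx.2.trans_lt (pow_lt_one₀ (norm_nonneg _) hpq two_ne_zero)

lemma directRotation_mem_unitary (hp : IsStarProjection p) (hq : IsStarProjection q)
    (hpq : ‖p - q‖ < 1) : directRotation p q ∈ unitary R := by
  set F := cfc (fun x : ℝ ↦ (√(1 - x))⁻¹) ((p - q) ^ 2)
  set z := p * q + (1 - p) * (1 - q)
  have hp' := hp.isIdempotentElem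
  have hq' := hq.isIdempotentElem
  have hF : star F = F := cfc_predicate (R := ℝ) _ ((p - q) ^ 2)
  have hFD : F ^ 2 * (1 - (p - q) ^ 2) = 1 :=
    cfc_inv_sqrt_one_sub_sq_mul_one_sub
      ((hp.isSelfAdjoint.sub hq.isSelfAdjoint).pow 2)
      (spectrum_sub_sq_subset_Iio hp.isSelfAdjoint hq.isSelfAdjoint hpq)
  obtain ⟨hFp, hFq⟩ := commute_cfc_sub_sq hp' hq' fun x : ℝ ↦ (√(1 - x))⁻¹
  have hFp' := (Commute.one_right F).sub_right hFp
  have hFq' := (Commute.one_right F).sub_right hFq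
  have hstar : star z = q * p + (1 - q) * (1 - p) := by
    simp only [z, star_add, star_mul, star_sub, star_one, hp.isSelfAdjoint.star_eq,
      hq.isSelfAdjoint.star_eq]
  have hFz : Commute F z := (hFp.mul_right hFq).add_right (hFp'.mul_right hFq')
  have hFz' : Commute F (star z) := hstar ▸ (hFq.mul_right hFp).add_right (hFq'.mul_right hFp')
  have hzz : star z * z = 1 - (p - q) ^ 2 := hstar ▸ one_sub_sub_sq_eq_mul hp' hq'
  have hzz' : z * star z = 1 - (p - q) ^ 2 := by
    rw [hstar, ← neg_sub q p, neg_sq, one_sub_sub_sq_eq_mul hq' hp']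
  change star (F * z) * (F * z) = 1 ∧ F * z * star (F * z) = 1
  rw [star_mul, hF]
  constructor
  · rw [← hFz'.eq, mul_assoc, ← mul_assoc (star z), ← hFz'.eq, mul_assoc F, hzz, ← mul_assoc, ← sq,
      hFD]
  · rw [← hFz'.eq, mul_assoc, ← mul_assoc z, ← hFz.eq, mul_assoc F, hzz', ← mul_assoc, ← sq, hFD]

lemma norm_mul_sub_directRotation_mul_le [CStarRing R] (hp : IsStarProjection p)
    (hq : IsStarProjection q) (hpq : ‖p - q‖ < 1) :
    ‖p * q - directRotation p q * q‖ ≤ ‖p - q‖ ^ 2 := by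
  set G := cfc (fun x : ℝ ↦ √(1 - x)) ((p - q) ^ 2)
  have hsa := hp.isSelfAdjoint.sub hq.isSelfAdjoint
  have hpq' : p * q = G * (directRotation p q * q) := by
    rw [directRotation_mul p hq.isIdempotentElem, ← mul_assoc,
      cfc_sqrt_one_sub_mul_cfc_inv_sqrt_one_sub (hsa.pow 2)
        (spectrum_sub_sq_subset_Iio hp.isSelfAdjoint hq.isSelfAdjoint hpq), one_mul]
  calc ‖p * q - directRotation p q * q‖
      = ‖(G - 1) * (directRotation p q * q)‖ := by rw [sub_mul, ← hpq', one_mul]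
    _ ≤ ‖G - 1‖ * ‖directRotation p q * q‖ := norm_mul_le _ _
    _ ≤ ‖p - q‖ ^ 2 * 1 := by
      refine mul_le_mul ?_ ?_ (norm_nonneg _) (sq_nonneg _)
      · exact norm_cfc_sqrt_one_sub_sub_one_le (hsa.pow 2)
          (pow_le_one₀ (norm_nonneg _) hpq.le) (spectrum_sq_subset_Icc hsa) (sq_nonneg _)
      · rw [CStarRing.norm_mem_unitary_mul q (directRotation_mem_unitary hp hq hpq)]
        exact IsStarProjection.norm_le q hq
    _ = ‖p - q‖ ^ 2 := mul_one _

end DirectRotation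

section ResidualPolynomial

open Polynomial

lemma pow_div_two_le_eval_chebyshev_T {y : ℝ} (hy : 0 < y) (k : ℕ) :
    y ^ k / 2 ≤ (Chebyshev.T ℝ k).eval ((y + y⁻¹) / 2) := by
  rw [← Real.cosh_log hy, Chebyshev.T_real_cosh, Real.cosh_eq, Int.cast_natCast, Real.exp_nat_mul,
    Real.exp_log hy]
  linarith [Real.exp_pos (-(k * Real.log y))]

lemma abs_div_sq_sub_sq_le_one {a b t : ℝ} (ha : 0 ≤ a) (hab : a < b) (hat : a ≤ |t|)
    (htb : |t| ≤ b) : |(b ^ 2 + a ^ 2 - 2 * t ^ 2) / (b ^ 2 - a ^ 2)| ≤ 1 := by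
  have hsq : 0 < b ^ 2 - a ^ 2 := sub_pos.2 (pow_lt_pow_left₀ hab ha two_ne_zero)
  have hta : a ^ 2 ≤ t ^ 2 := sq_abs t ▸ pow_le_pow_left₀ ha hat 2
  have htb' : t ^ 2 ≤ b ^ 2 := sq_abs t ▸ pow_le_pow_left₀ (abs_nonneg t) htb 2
  rw [abs_le, le_div_iff₀ hsq, div_le_iff₀ hsq]
  constructor <;> linarith

lemma exists_residual_polynomial_of_lt {a b : ℝ} (ha : 0 < a) (hab : a < b) (k : ℕ) :
    ∃ q : ℝ[X], q.natDegree ≤ 2 * k ∧ q.eval 0 = 1 ∧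
      ∀ t : ℝ, a ≤ |t| → |t| ≤ b → |q.eval t| ≤ 2 * ((b - a) / (b + a)) ^ k := by
  have hba : 0 < b - a := sub_pos.2 hab
  have hba' : 0 < b + a := by linarith
  have hsq : 0 < b ^ 2 - a ^ 2 := by nlinarith
  set y := (b + a) / (b - a)
  have hy : 0 < y := by positivity
  set L : ℝ[X] := C ((y + y⁻¹) / 2) - C (2 / (b ^ 2 - a ^ 2)) * X ^ 2
  have hL (t : ℝ) : L.eval t = (b ^ 2 + a ^ 2 - 2 * t ^ 2) / (b ^ 2 - a ^ 2) := by
    simp only [L, y, eval_sub, eval_mul, eval_C, eval_pow, eval_X]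
    field_simp
    ring
  have hL0 : L.eval 0 = (y + y⁻¹) / 2 := by
    simp only [L, eval_sub, eval_mul, eval_C, eval_pow, eval_X]
    ring
  set z := (Chebyshev.T ℝ k).eval (L.eval 0) with hz
  have hyz : y ^ k / 2 ≤ z := by
    rw [hz, hL0]
    exact pow_div_two_le_eval_chebyshev_T hy k
  have hz0 : 0 < z := lt_of_lt_of_le (by positivity) hyz
  refine ⟨C z⁻¹ * (Chebyshev.T ℝ k).comp L, ?_, ?_, fun t hat htb ↦ ?_⟩
  · have hdegL : L.natDegree ≤ 2 := by unfold L; compute_degree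
    calc (C z⁻¹ * (Chebyshev.T ℝ k).comp L).natDegree
        ≤ (Chebyshev.T ℝ k).natDegree * L.natDegree :=
          (natDegree_C_mul_le _ _).trans natDegree_comp_le
      _ ≤ k * 2 := Nat.mul_le_mul (by simp) hdegL
      _ = 2 * k := mul_comm _ _
  · rw [eval_mul, eval_C, eval_comp, inv_mul_cancel₀ hz0.ne']
  · have hLt : |L.eval t| ≤ 1 := hL t ▸ abs_div_sq_sub_sq_le_one ha.le hab hat htb
    rw [eval_mul, eval_C, eval_comp, abs_mul, abs_of_pos (inv_pos.2 hz0)]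
    calc z⁻¹ * |(Chebyshev.T ℝ k).eval (L.eval t)|
        ≤ (y ^ k / 2)⁻¹ * 1 := by
          gcongr
          exact Chebyshev.abs_eval_T_real_le_one k hLt
      _ = 2 * ((b - a) / (b + a)) ^ k := by
          rw [mul_one, inv_div, ← inv_div (b + a), inv_pow, div_eq_mul_inv]

lemma exists_residual_polynomial {a b : ℝ} (ha : 0 < a) (hab : a ≤ b) (k : ℕ) :
    ∃ q : ℝ[X], q.natDegree ≤ 2 * k ∧ q.eval 0 = 1 ∧
      ∀ t : ℝ, a ≤ |t| → |t| ≤ b → |q.eval t| ≤ 2 * ((b - a) / (b + a)) ^ k := by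
  rcases hab.eq_or_lt with rfl | hlt
  · refine ⟨(1 - C (a ^ 2)⁻¹ * X ^ 2) ^ k, ?_, ?_, fun t hat hta ↦ ?_⟩
    · have hbase : (1 - C (a ^ 2)⁻¹ * X ^ 2).natDegree ≤ 2 := by compute_degree
      exact (natDegree_pow_le_of_le k hbase).trans_eq (mul_comm k 2)
    · simp
    · have ht : t ^ 2 = a ^ 2 := by rw [← sq_abs t, le_antisymm hta hat]
      have ha2 : a ^ 2 ≠ 0 := by positivity
      have h0 : (0 : ℝ) ≤ 0 ^ k := by positivity
      simp only [eval_pow, eval_sub, eval_one, eval_mul, eval_C, eval_X, ht, inv_mul_cancel₀ ha2,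
        sub_self, abs_pow, abs_zero, zero_div]
      linarith
  · exact exists_residual_polynomial_of_lt ha hlt k

end ResidualPolynomial

section Minres

open Polynomial
open scoped Matrix.Norms.L2Operator

variable {n : Type*} [Fintype n] [DecidableEq n] {H P : Matrix n n ℝ}

lemma exists_mem_Krylov_mulVec_add_eq_aeval_mulVec (H : Matrix n n ℝ) (r : n → ℝ) {j : ℕ}
    {q : ℝ[X]} (hdeg : q.natDegree ≤ j) (hq : q.eval 0 = 1) :
    ∃ w ∈ Krylov H r j, H *ᵥ w + r = aeval H q *ᵥ r := by
  refine ⟨∑ i ∈ Finset.range j, q.coeff (i + 1) • (H ^ i *ᵥ r), ?_, ?_⟩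
  · exact Submodule.sum_mem _ fun i hi ↦
      Submodule.smul_mem _ _ (Submodule.subset_span ⟨i, Finset.mem_range.1 hi, rfl⟩)
  · have hsum : aeval H q = ∑ i ∈ Finset.range j, q.coeff (i + 1) • H ^ (i + 1) + 1 := by
      rw [aeval_eq_sum_range' (Nat.lt_succ_of_le hdeg), Finset.sum_range_succ', pow_zero,
        coeff_zero_eq_eval_zero, hq, one_smul]
    simp only [hsum, add_mulVec, sum_mulVec, mulVec_sum, smul_mulVec, mulVec_smul, mulVec_mulVec,
      pow_succ', one_mulVec]

lemma norm_aeval_le_of_forall_eigenvalue (hH : Hᵀ = H) {q : ℝ[X]} {c : ℝ} (hc : 0 ≤ c)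
    (hq : ∀ (μ : ℝ) (x : n → ℝ), x ≠ 0 → H *ᵥ x = μ • x → |q.eval μ| ≤ c) : ‖aeval H q‖ ≤ c := by
  rw [← cfc_polynomial q H (isSelfAdjoint_of_transpose_eq hH)]
  refine norm_cfc_le hc fun μ hμ ↦ ?_
  rw [← spectrum_toLin', ← Module.End.hasEigenvalue_iff_mem_spectrum] at hμ
  obtain ⟨x, hx⟩ := hμ.exists_hasEigenvector
  exact hq μ x hx.2 hx.apply_eq_smul

lemma aeval_add_smul_one_sub_mulVec (hPH : Commute P H) (a : ℝ) (q : ℝ[X]) {r : n → ℝ}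
    (hr : P *ᵥ r = r) : aeval (H + a • (1 - P)) q *ᵥ r = aeval H q *ᵥ r := by
  have hpow (i : ℕ) : (H + a • (1 - P)) ^ i *ᵥ r = H ^ i *ᵥ r := by
    induction i with
    | zero => simp only [pow_zero]
    | succ i ih =>
      have hPi : P *ᵥ (H ^ i *ᵥ r) = H ^ i *ᵥ r := by
        rw [mulVec_mulVec, (hPH.pow_right i).eq, ← mulVec_mulVec, hr]
      rw [pow_succ', ← mulVec_mulVec, ih, add_mulVec, smul_mulVec, sub_mulVec, one_mulVec, hPi,
        sub_self, smul_zero, add_zero, mulVec_mulVec, ← pow_succ']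
  simp only [aeval_eq_sum_range, sum_mulVec, smul_mulVec, hpow]

lemma abs_eigenvalue_add_smul_one_sub_mem_Icc (hP : IsIdempotentElem P) (hPH : P * H = H)
    (hHP : H * P = H) {a b : ℝ} (ha : 0 ≤ a) (hab : a ≤ b)
    (hlow : ∀ x, P *ᵥ x = x → a * vnorm x ≤ vnorm (H *ᵥ x)) (hHb : ‖H‖ ≤ b) {μ : ℝ} {x : n → ℝ}
    (hx : x ≠ 0) (hμ : (H + a • (1 - P)) *ᵥ x = μ • x) : |μ| ∈ Set.Icc a b := by
  have hHx : H *ᵥ (P *ᵥ x) = μ • (P *ᵥ x) := by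
    rw [← mulVec_smul, ← hμ, mulVec_mulVec, mulVec_mulVec, mul_add, hPH, mul_smul_comm,
      hP.mul_one_sub_self, smul_zero, add_zero, hHP]
  rcases eq_or_ne (P *ᵥ x) 0 with hPx | hPx
  · have hax : a • x = μ • x := by
      rw [← hμ, ← hHP, add_mulVec, ← mulVec_mulVec, smul_mulVec, sub_mulVec, hPx, mulVec_zero,
        zero_add, sub_zero, one_mulVec]
    rw [← smul_left_injective ℝ hx hax, abs_of_nonneg ha]
    exact ⟨le_rfl, hab⟩
  · have hpos := vnorm_pos hPx
    have hμx : vnorm (H *ᵥ (P *ᵥ x)) = |μ| * vnorm (P *ᵥ x) := by rw [hHx, vnorm_smul]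
    constructor
    · refine le_of_mul_le_mul_right ((hlow _ ?_).trans_eq hμx) hpos
      rw [mulVec_mulVec, hP.eq]
    · refine le_of_mul_le_mul_right (hμx.symm.trans_le ?_) hpos
      exact (vnorm_mulVec_le H _).trans (mul_le_mul_of_nonneg_right hHb hpos.le)

theorem exists_mem_Krylov_vnorm_mulVec_add_le (hH : Hᵀ = H) (hP : IsStarProjection P)
    (hPH : P * H = H) {a b : ℝ} (ha : 0 < a) (hab : a ≤ b)
    (hlow : ∀ x, P *ᵥ x = x → a * vnorm x ≤ vnorm (H *ᵥ x)) (hHb : ‖H‖ ≤ b) {r : n → ℝ}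
    (hr : P *ᵥ r = r) (j : ℕ) :
    ∃ w ∈ Krylov H r j, vnorm (H *ᵥ w + r) ≤ 2 * ((b - a) / (b + a)) ^ (j / 2) * vnorm r := by
  have hPt := transpose_eq_self_of_isStarProjection hP
  have hHP : H * P = H := by rw [← transpose_inj, transpose_mul, hH, hPt, hPH]
  obtain ⟨q, hdeg, hq0, hq⟩ := exists_residual_polynomial ha hab (j / 2)
  obtain ⟨w, hw, hwr⟩ := exists_mem_Krylov_mulVec_add_eq_aeval_mulVec H r
    (hdeg.trans (Nat.mul_div_le j 2)) hq0
  have hrate : 0 ≤ (b - a) / (b + a) := div_nonneg (sub_nonneg.2 hab) (by linarith)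
  refine ⟨w, hw, ?_⟩
  rw [hwr, ← aeval_add_smul_one_sub_mulVec (hPH.trans hHP.symm) a q hr]
  refine (vnorm_mulVec_le _ r).trans (mul_le_mul_of_nonneg_right ?_ (vnorm_nonneg r))
  refine norm_aeval_le_of_forall_eigenvalue ?_ (by positivity) fun μ x hx hμ ↦ ?_
  · simp only [transpose_add, transpose_smul, transpose_sub, transpose_one, hH, hPt]
  · obtain ⟨haμ, hμb⟩ := abs_eigenvalue_add_smul_one_sub_mem_Icc hP.isIdempotentElem hPH hHP ha.le
      hab hlow hHb hx hμ
    exact hq μ haμ hμb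

end Minres

section JordanWielandt

open scoped Matrix.Norms.L2Operator

variable {p q : Type*}

/-- The Jordan–Wielandt matrix `[[0, A], [Aᵀ, 0]]` of `A`, whose nonzero eigenvalues are plus and
minus the nonzero singular values of `A`. -/
def jordanWielandt (A : Matrix p q ℝ) : Matrix (p ⊕ q) (p ⊕ q) ℝ := fromBlocks 0 A Aᵀ 0

lemma jordanWielandt_transpose (A : Matrix p q ℝ) : (jordanWielandt A)ᵀ = jordanWielandt A := by
  simp only [jordanWielandt, fromBlocks_transpose, transpose_zero, transpose_transpose]

lemma jordanWielandt_sub (A E : Matrix p q ℝ) :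
    jordanWielandt (A - E) = jordanWielandt A - jordanWielandt E := by
  ext (i | i) (j | j) <;> simp [jordanWielandt]

lemma jordanWielandt_sub_smul_one [DecidableEq p] [DecidableEq q] (A : Matrix p q ℝ) (τ : ℝ) :
    jordanWielandt A - τ • 1 = fromBlocks ((-τ) • 1) A Aᵀ ((-τ) • 1) := by
  rw [← fromBlocks_one, fromBlocks_smul, jordanWielandt, sub_eq_add_neg, fromBlocks_neg,
    fromBlocks_add]
  simp only [neg_smul, smul_zero, neg_zero, zero_add, add_zero]

variable [Fintype p] [Fintype q]

lemma fromBlocks_mul_jordanWielandt_mul_transpose (A : Matrix p q ℝ) (W₁ : Matrix p p ℝ)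
    (W₂ : Matrix q q ℝ) :
    fromBlocks W₁ 0 0 W₂ * jordanWielandt A * (fromBlocks W₁ 0 0 W₂)ᵀ =
      jordanWielandt (W₁ * A * W₂ᵀ) := by
  simp [jordanWielandt, fromBlocks_transpose, fromBlocks_multiply, Matrix.mul_assoc]

lemma jordanWielandt_mulVec_sumElim (A : Matrix p q ℝ) (u : p → ℝ) (v : q → ℝ) :
    jordanWielandt A *ᵥ Sum.elim u v = Sum.elim (A *ᵥ v) (Aᵀ *ᵥ u) := by
  rw [jordanWielandt, fromBlocks_mulVec, Sum.elim_comp_inl, Sum.elim_comp_inr, zero_mulVec,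
    zero_mulVec, zero_add, add_zero]

lemma vnorm_sq_jordanWielandt_sub_smul_one_mulVec [DecidableEq p] [DecidableEq q]
    (A : Matrix p q ℝ) (τ : ℝ) (u : p → ℝ) (v : q → ℝ) :
    vnorm ((jordanWielandt A - τ • 1) *ᵥ Sum.elim u v) ^ 2 =
      vnorm (A *ᵥ v - τ • u) ^ 2 + vnorm (Aᵀ *ᵥ u - τ • v) ^ 2 := by
  rw [sub_mulVec, smul_mulVec, one_mulVec, jordanWielandt_mulVec_sumElim, ← vnorm_sumElim_sq]
  congr 2
  ext (i | i) <;> simp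

lemma isStarProjection_fromBlocks {P₁ : Matrix p p ℝ} {P₂ : Matrix q q ℝ}
    (h₁ : IsStarProjection P₁) (h₂ : IsStarProjection P₂) :
    IsStarProjection (fromBlocks P₁ 0 0 P₂) := by
  refine ⟨?_, isSelfAdjoint_of_transpose_eq ?_⟩
  · simp [IsIdempotentElem, fromBlocks_multiply, h₁.isIdempotentElem.eq, h₂.isIdempotentElem.eq]
  · simp [fromBlocks_transpose, transpose_eq_self_of_isStarProjection, h₁, h₂]

lemma commute_fromBlocks_jordanWielandt {A : Matrix p q ℝ} {P₁ : Matrix p p ℝ}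
    {P₂ : Matrix q q ℝ} (hP₁ : P₁ᵀ = P₁) (hP₂ : P₂ᵀ = P₂) (hA : A * P₂ = P₁ * A) :
    Commute (fromBlocks P₁ 0 0 P₂) (jordanWielandt A) := by
  have hA' : P₂ * Aᵀ = Aᵀ * P₁ := by
    simpa only [transpose_mul, hP₁, hP₂] using congrArg transpose hA
  simp [commute_iff_eq, jordanWielandt, fromBlocks_multiply, hA, hA']

variable [DecidableEq p] [DecidableEq q]

lemma l2_opNorm_jordanWielandt_le (A : Matrix p q ℝ) : ‖jordanWielandt A‖ ≤ ‖A‖ := by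
  refine l2_opNorm_le_of_forall (norm_nonneg A) fun x ↦
    le_of_sq_le_sq ?_ (mul_nonneg (norm_nonneg A) (vnorm_nonneg x))
  obtain ⟨u, v, rfl⟩ : ∃ u v, x = Sum.elim u v := ⟨_, _, (Sum.elim_comp_inl_inr x).symm⟩
  have hu := pow_le_pow_left₀ (vnorm_nonneg _) (vnorm_mulVec_le Aᵀ u) 2
  have hv := pow_le_pow_left₀ (vnorm_nonneg _) (vnorm_mulVec_le A v) 2
  rw [l2_opNorm_transpose, mul_pow] at hu
  rw [mul_pow] at hv
  rw [jordanWielandt_mulVec_sumElim, mul_pow, vnorm_sumElim_sq, vnorm_sumElim_sq]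
  linarith

lemma fromBlocks_mul_jordanWielandt_sub_smul_one_mul {P₁ : Matrix p p ℝ} {P₂ : Matrix q q ℝ}
    (h₁ : IsStarProjection P₁) (h₂ : IsStarProjection P₂) (A : Matrix p q ℝ) (τ : ℝ) :
    fromBlocks P₁ 0 0 P₂ * (jordanWielandt A - τ • 1) * fromBlocks P₁ 0 0 P₂ =
      jordanWielandt (P₁ * A * P₂) - τ • fromBlocks P₁ 0 0 P₂ := by
  have hP := isStarProjection_fromBlocks h₁ h₂
  have hconj := fromBlocks_mul_jordanWielandt_mul_transpose A P₁ P₂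
  rw [transpose_eq_self_of_isStarProjection hP, transpose_eq_self_of_isStarProjection h₂] at hconj
  rw [mul_sub, sub_mul, hconj, Algebra.mul_smul_comm, mul_one, Algebra.smul_mul_assoc,
    hP.isIdempotentElem.eq]

end JordanWielandt

section Compression

open scoped Matrix.Norms.L2Operator

variable {p q : Type*} [Fintype p] [Fintype q] {A : Matrix p q ℝ}
  {P₁ Q₁ : Matrix p p ℝ} {P₂ Q₂ : Matrix q q ℝ}

lemma mul_mul_sub_eq_of_mul_eq_mul (hP₁ : IsIdempotentElem P₁) (hP₂ : IsIdempotentElem P₂)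
    (hQ₂ : IsIdempotentElem Q₂) (hAQ : A * Q₂ = Q₁ * A) (W₁ : Matrix p p ℝ) (W₂ : Matrix q q ℝ) :
    P₁ * A * P₂ - W₁ * (Q₁ * A * Q₂) * W₂ =
      P₁ * (P₁ - Q₁) * A * ((P₂ - Q₂) * P₂) + (P₁ * Q₁ - W₁ * Q₁) * A * (Q₂ * P₂) +
        W₁ * Q₁ * A * (Q₂ * P₂ - Q₂ * W₂) := by
  have hQA (Y : Matrix q q ℝ) : Q₁ * (A * Y) = A * (Q₂ * Y) := by
    rw [← Matrix.mul_assoc, ← hAQ, Matrix.mul_assoc]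
  have hQQ (Y : Matrix q q ℝ) : Q₂ * (Q₂ * Y) = Q₂ * Y := by rw [← mul_assoc, hQ₂.eq]
  have hPP (Y : Matrix p q ℝ) : P₁ * (P₁ * Y) = P₁ * Y := by rw [← Matrix.mul_assoc, hP₁.eq]
  simp only [Matrix.mul_sub, Matrix.sub_mul, Matrix.mul_assoc, hQA, hQQ, hPP, hP₂.eq]
  abel

variable [DecidableEq p] [DecidableEq q]

lemma norm_mul_mul_sub_directRotation_le (hP₁ : IsStarProjection P₁) (hP₂ : IsStarProjection P₂)
    (hQ₁ : IsStarProjection Q₁) (hQ₂ : IsStarProjection Q₂) (hAQ : A * Q₂ = Q₁ * A)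
    (h₁ : ‖P₁ - Q₁‖ < 1) (h₂ : ‖P₂ - Q₂‖ < 1) :
    ‖P₁ * A * P₂ - directRotation P₁ Q₁ * (Q₁ * A * Q₂) * (directRotation P₂ Q₂)ᵀ‖ ≤
      ‖A‖ * (‖P₁ - Q₁‖ + ‖P₂ - Q₂‖) ^ 2 := by
  set W₁ := directRotation P₁ Q₁
  set W₂ := directRotation P₂ Q₂
  set s := ‖P₁ - Q₁‖
  set t := ‖P₂ - Q₂‖
  have hmul₃ {Y : Matrix p p ℝ} {Z : Matrix q q ℝ} {y z : ℝ} (hY : ‖Y‖ ≤ y) (hZ : ‖Z‖ ≤ z) :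
      ‖Y * A * Z‖ ≤ y * ‖A‖ * z := by
    have hy : 0 ≤ y := (norm_nonneg Y).trans hY
    calc ‖Y * A * Z‖ ≤ ‖Y * A‖ * ‖Z‖ := l2_opNorm_mul _ _
      _ ≤ ‖Y‖ * ‖A‖ * ‖Z‖ := by gcongr; exact l2_opNorm_mul _ _
      _ ≤ y * ‖A‖ * z := by gcongr
  have hs : ‖P₁ * (P₁ - Q₁)‖ ≤ 1 * s := norm_mul_le_of_le (hP₁.norm_le P₁) le_rfl
  have ht : ‖(P₂ - Q₂) * P₂‖ ≤ t * 1 := norm_mul_le_of_le le_rfl (hP₂.norm_le P₂)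
  have hQP : ‖Q₂ * P₂‖ ≤ 1 * 1 := norm_mul_le_of_le (hQ₂.norm_le Q₂) (hP₂.norm_le P₂)
  have hWQ : ‖W₁ * Q₁‖ ≤ 1 := by
    rw [CStarRing.norm_mem_unitary_mul Q₁ (directRotation_mem_unitary hP₁ hQ₁ h₁)]
    exact hQ₁.norm_le Q₁
  have hQW : ‖Q₂ * P₂ - Q₂ * W₂ᵀ‖ ≤ t ^ 2 := by
    rw [← l2_opNorm_transpose, transpose_sub, transpose_mul, transpose_mul, transpose_transpose,
      transpose_eq_self_of_isStarProjection hP₂, transpose_eq_self_of_isStarProjection hQ₂]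
    exact norm_mul_sub_directRotation_mul_le hP₂ hQ₂ h₂
  rw [mul_mul_sub_eq_of_mul_eq_mul hP₁.isIdempotentElem hP₂.isIdempotentElem hQ₂.isIdempotentElem
    hAQ]
  calc _ ≤ 1 * s * ‖A‖ * (t * 1) + s ^ 2 * ‖A‖ * (1 * 1) + 1 * ‖A‖ * t ^ 2 :=
        norm_add₃_le.trans (add_le_add_three (hmul₃ hs ht)
          (hmul₃ (norm_mul_sub_directRotation_mul_le hP₁ hQ₁ h₁) hQP) (hmul₃ hWQ hQW))
    _ = ‖A‖ * (s + t) ^ 2 - ‖A‖ * (s * t) := by ring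
    _ ≤ ‖A‖ * (s + t) ^ 2 := sub_le_self _ (by positivity)

lemma transpose_mul_self_of_mem_unitary {W : Matrix p p ℝ} (hW : W ∈ unitary (Matrix p p ℝ)) :
    Wᵀ * W = 1 := by
  rw [← conjTranspose_eq_transpose_of_trivial]
  exact Unitary.star_mul_self_of_mem hW

lemma compression_eq_conj_add (hP₁ : IsStarProjection P₁) (hP₂ : IsStarProjection P₂)
    (hQ₁ : IsStarProjection Q₁) (hQ₂ : IsStarProjection Q₂) {W₁ : Matrix p p ℝ}
    {W₂ : Matrix q q ℝ} (hW₁ : W₁ᵀ * W₁ = 1) (hW₂ : W₂ᵀ * W₂ = 1) (hPW₁ : P₁ * W₁ = W₁ * Q₁)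
    (hPW₂ : P₂ * W₂ = W₂ * Q₂) (A : Matrix p q ℝ) (τ : ℝ) :
    fromBlocks P₁ 0 0 P₂ * (jordanWielandt A - τ • 1) * fromBlocks P₁ 0 0 P₂ =
      fromBlocks W₁ 0 0 W₂ *
          (fromBlocks Q₁ 0 0 Q₂ * (jordanWielandt A - τ • 1) * fromBlocks Q₁ 0 0 Q₂) *
          (fromBlocks W₁ 0 0 W₂)ᵀ +
        jordanWielandt (P₁ * A * P₂ - W₁ * (Q₁ * A * Q₂) * W₂ᵀ) := by
  have hP : fromBlocks W₁ 0 0 W₂ * fromBlocks Q₁ 0 0 Q₂ * (fromBlocks W₁ 0 0 W₂)ᵀ =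
      fromBlocks P₁ 0 0 P₂ := by
    simp [fromBlocks_multiply, fromBlocks_transpose, ← hPW₁, ← hPW₂, mul_assoc,
      mul_eq_one_comm.1 hW₁, mul_eq_one_comm.1 hW₂]
  rw [fromBlocks_mul_jordanWielandt_sub_smul_one_mul hP₁ hP₂,
    fromBlocks_mul_jordanWielandt_sub_smul_one_mul hQ₁ hQ₂, mul_sub, sub_mul,
    fromBlocks_mul_jordanWielandt_mul_transpose, Algebra.mul_smul_comm, Algebra.smul_mul_assoc, hP,
    jordanWielandt_sub]
  abel

lemma le_vnorm_conj_add_mulVec {P Q W K : Matrix p p ℝ} {d : ℝ} (hP : IsStarProjection P)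
    (hQ : IsStarProjection Q) (hW : Wᵀ * W = 1) (hPW : P * W = W * Q)
    (hlow : ∀ x, Q *ᵥ x = x → d * vnorm x ≤ vnorm (K *ᵥ x)) (E : Matrix p p ℝ) {x : p → ℝ}
    (hx : P *ᵥ x = x) : (d - ‖E‖) * vnorm x ≤ vnorm ((W * K * Wᵀ + E) *ᵥ x) := by
  have hQW : Q * Wᵀ = Wᵀ * P := by
    simpa only [transpose_mul, transpose_eq_self_of_isStarProjection hP,
      transpose_eq_self_of_isStarProjection hQ, eq_comm] using congrArg transpose hPW
  have hy : Q *ᵥ (Wᵀ *ᵥ x) = Wᵀ *ᵥ x := by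
    rw [mulVec_mulVec, hQW, ← mulVec_mulVec, hx]
  have hxy : vnorm (Wᵀ *ᵥ x) = vnorm x :=
    vnorm_mulVec_of_transpose_mul_self (by rw [transpose_transpose, mul_eq_one_comm.1 hW]) x
  calc (d - ‖E‖) * vnorm x ≤ vnorm (K *ᵥ (Wᵀ *ᵥ x)) - vnorm (E *ᵥ x) := by
        rw [sub_mul, ← hxy]
        exact sub_le_sub (hlow _ hy) (hxy ▸ vnorm_mulVec_le E x)
    _ = vnorm ((W * K * Wᵀ) *ᵥ x) - vnorm (E *ᵥ x) := by
        rw [mul_assoc, ← mulVec_mulVec, ← mulVec_mulVec, vnorm_mulVec_of_transpose_mul_self hW]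
    _ ≤ vnorm ((W * K * Wᵀ + E) *ᵥ x) := by
        rw [add_mulVec]
        exact vnorm_sub_le_vnorm_add _ _

lemma le_vnorm_compression_sub_smul_one_mulVec {P H : Matrix p p ℝ} (hP : IsStarProjection P)
    (τ : ℝ) {x : p → ℝ} (hx : P *ᵥ x = x) :
    (τ - ‖H‖) * vnorm x ≤ vnorm ((P * (H - τ • 1) * P) *ᵥ x) := by
  have hPH : ‖P * H‖ ≤ ‖H‖ := by
    simpa only [one_mul] using norm_mul_le_of_le (hP.norm_le P) (le_refl ‖H‖)
  calc (τ - ‖H‖) * vnorm x ≤ vnorm ((-τ) • x) - vnorm ((P * H) *ᵥ x) := by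
        rw [sub_mul, vnorm_smul, abs_neg]
        gcongr
        · exact vnorm_nonneg x
        · exact le_abs_self τ
        · exact (vnorm_mulVec_le _ _).trans (mul_le_mul_of_nonneg_right hPH (vnorm_nonneg x))
    _ ≤ vnorm ((-τ) • x + (P * H) *ᵥ x) := vnorm_sub_le_vnorm_add _ _
    _ = vnorm ((P * (H - τ • 1) * P) *ᵥ x) := by
        rw [← mulVec_mulVec x _ P, hx, mul_sub, sub_mulVec, mul_smul_comm, mul_one, smul_mulVec, hx,
          neg_smul, neg_add_eq_sub]

lemma le_vnorm_compression_mulVec (hP₁ : IsStarProjection P₁)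
    (hP₂ : IsStarProjection P₂) (hQ₁ : IsStarProjection Q₁) (hQ₂ : IsStarProjection Q₂)
    (hAQ : A * Q₂ = Q₁ * A) {d τ : ℝ} (hdτ : d ≤ τ)
    (hlow : ∀ x, fromBlocks Q₁ 0 0 Q₂ *ᵥ x = x →
      d * vnorm x ≤ vnorm ((jordanWielandt A - τ • 1) *ᵥ x))
    {x : p ⊕ q → ℝ} (hx : fromBlocks P₁ 0 0 P₂ *ᵥ x = x) :
    (d - ‖A‖ * (‖P₁ - Q₁‖ + ‖P₂ - Q₂‖) ^ 2) * vnorm x ≤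
      vnorm ((fromBlocks P₁ 0 0 P₂ * (jordanWielandt A - τ • 1) * fromBlocks P₁ 0 0 P₂) *ᵥ x) := by
  rcases lt_or_ge (‖P₁ - Q₁‖ + ‖P₂ - Q₂‖) 1 with hgap | hgap
  · have hgap₁ : ‖P₁ - Q₁‖ < 1 := by linarith [norm_nonneg (P₂ - Q₂)]
    have hgap₂ : ‖P₂ - Q₂‖ < 1 := by linarith [norm_nonneg (P₁ - Q₁)]
    have hW₁ := transpose_mul_self_of_mem_unitary (directRotation_mem_unitary hP₁ hQ₁ hgap₁)
    have hW₂ := transpose_mul_self_of_mem_unitary (directRotation_mem_unitary hP₂ hQ₂ hgap₂)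
    have hPW₁ := mul_directRotation hP₁.isIdempotentElem hQ₁.isIdempotentElem
    have hPW₂ := mul_directRotation hP₂.isIdempotentElem hQ₂.isIdempotentElem
    have hP := isStarProjection_fromBlocks hP₁ hP₂
    have hQ := isStarProjection_fromBlocks hQ₁ hQ₂
    set E := P₁ * A * P₂ - directRotation P₁ Q₁ * (Q₁ * A * Q₂) * (directRotation P₂ Q₂)ᵀ
    have hE : ‖jordanWielandt E‖ ≤ ‖A‖ * (‖P₁ - Q₁‖ + ‖P₂ - Q₂‖) ^ 2 :=
      (l2_opNorm_jordanWielandt_le E).trans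
        (norm_mul_mul_sub_directRotation_le hP₁ hP₂ hQ₁ hQ₂ hAQ hgap₁ hgap₂)
    rw [compression_eq_conj_add hP₁ hP₂ hQ₁ hQ₂ hW₁ hW₂ hPW₁ hPW₂]
    refine le_trans (mul_le_mul_of_nonneg_right (sub_le_sub_left hE d) (vnorm_nonneg x))
      (le_vnorm_conj_add_mulVec hP hQ ?_ ?_ ?_ _ hx)
    · simp [fromBlocks_multiply, fromBlocks_transpose, hW₁, hW₂]
    · simp [fromBlocks_multiply, hPW₁, hPW₂]
    · intro y hy
      have hcomm : Commute (fromBlocks Q₁ 0 0 Q₂) (jordanWielandt A - τ • 1) :=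
        (commute_fromBlocks_jordanWielandt (transpose_eq_self_of_isStarProjection hQ₁)
          (transpose_eq_self_of_isStarProjection hQ₂) hAQ).sub_right
          ((Commute.one_right _).smul_right τ)
      rw [hcomm.eq, ← mulVec_mulVec, ← mulVec_mulVec, hy, hy]
      exact hlow y hy
  · refine le_trans ?_ (le_vnorm_compression_sub_smul_one_mulVec
      (isStarProjection_fromBlocks hP₁ hP₂) τ hx)
    refine mul_le_mul_of_nonneg_right (sub_le_sub hdτ ?_) (vnorm_nonneg x)
    refine (l2_opNorm_jordanWielandt_le A).trans ?_
    exact le_mul_of_one_le_right (norm_nonneg A) (one_le_pow₀ hgap)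

end Compression

section ThinSVD

open scoped Matrix.Norms.L2Operator

variable {p q k l : Type*} [Fintype p] [Fintype q] [DecidableEq k]

lemma transpose_submatrix_mul_submatrix [DecidableEq l] {X : Matrix p k ℝ} (hX : Xᵀ * X = 1)
    (g : l ↪ k) : (X.submatrix id g)ᵀ * X.submatrix id g = 1 := by
  rw [transpose_submatrix, ← submatrix_mul _ _ _ _ _ Function.bijective_id, hX,
    submatrix_one_embedding]

variable [Fintype k]

/-- `A = X * diagonal σ * Yᵀ` is a thin singular value decomposition: the columns of `X` and of `Y`
are orthonormal left and right singular vectors and `σ` lists the singular values. The index type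
`k` need not match the size of `A`; only nonzero singular values have to be listed. -/
structure IsThinSVD (A : Matrix p q ℝ) (X : Matrix p k ℝ) (σ : k → ℝ) (Y : Matrix q k ℝ) :
    Prop where
  left_orthonormal : Xᵀ * X = 1
  right_orthonormal : Yᵀ * Y = 1
  nonneg : ∀ i, 0 ≤ σ i
  eq_mul : A = X * diagonal σ * Yᵀ

variable {A : Matrix p q ℝ} {X : Matrix p k ℝ} {σ : k → ℝ} {Y : Matrix q k ℝ}

lemma vnorm_sq_eq_sum_add [DecidableEq p] (hX : Xᵀ * X = 1) (u : p → ℝ) :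
    vnorm u ^ 2 = ∑ i, (Xᵀ *ᵥ u) i ^ 2 + vnorm ((1 - X * Xᵀ) *ᵥ u) ^ 2 := by
  rw [← vnorm_sq_mulVec_add_vnorm_sq_one_sub_mulVec (isStarProjection_one_sub_mul_transpose hX),
    sub_sub_cancel, ← mulVec_mulVec, vnorm_mulVec_of_transpose_mul_self hX, vnorm_sq (Xᵀ *ᵥ u),
    add_comm]

lemma transpose_mulVec_eq_zero_of_one_sub_mulVec [DecidableEq p] (hX : Xᵀ * X = 1) {u : p → ℝ}
    (hu : (1 - X * Xᵀ) *ᵥ u = u) : Xᵀ *ᵥ u = 0 := by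
  rw [← hu, mulVec_mulVec, Matrix.mul_sub, ← Matrix.mul_assoc, hX, Matrix.mul_one, Matrix.one_mul,
    sub_self, zero_mulVec]

namespace IsThinSVD

lemma of_svd [Fintype l] [DecidableEq l] {U : Matrix p l ℝ} (hU : Uᵀ * U = 1) (hY : Yᵀ * Y = 1)
    (hσ : ∀ i, 0 ≤ σ i) (e : k ↪ l) {S : Matrix l k ℝ}
    (hS : ∀ i j, S i j = if i = e j then σ j else 0) (hA : A = U * S * Yᵀ) :
    IsThinSVD A (U.submatrix id e) σ Y where
  left_orthonormal := transpose_submatrix_mul_submatrix hU e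
  right_orthonormal := hY
  nonneg := hσ
  eq_mul := by
    rw [hA]
    congr 1
    ext i j
    rw [mul_diagonal, submatrix_apply, id, mul_apply, Finset.sum_eq_single_of_mem (e j)
      (Finset.mem_univ _) fun x _ hx ↦ by rw [hS, if_neg hx, mul_zero], hS, if_pos rfl]

lemma transpose (h : IsThinSVD A X σ Y) : IsThinSVD Aᵀ Y σ X where
  left_orthonormal := h.right_orthonormal
  right_orthonormal := h.left_orthonormal
  nonneg := h.nonneg
  eq_mul := by
    rw [h.eq_mul, transpose_mul, transpose_mul, transpose_transpose, diagonal_transpose,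
      Matrix.mul_assoc]

lemma mul_submatrix (h : IsThinSVD A X σ Y) [Fintype l] [DecidableEq l] (g : l → k) :
    A * Y.submatrix id g = X.submatrix id g * diagonal (σ ∘ g) := by
  have hAY : A * Y = X * diagonal σ := by
    rw [h.eq_mul, Matrix.mul_assoc, h.right_orthonormal, Matrix.mul_one]
  ext i j
  have hij := congrFun (congrFun hAY i) (g j)
  rw [mul_diagonal] at hij ⊢
  exact hij

lemma mul_one_sub_submatrix_mul_transpose (h : IsThinSVD A X σ Y) [Fintype l] [DecidableEq p]
    [DecidableEq q] (g : l → k) :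
    A * (1 - Y.submatrix id g * (Y.submatrix id g)ᵀ) =
      (1 - X.submatrix id g * (X.submatrix id g)ᵀ) * A := by
  classical
  have htranspose : (X.submatrix id g)ᵀ * A = diagonal (σ ∘ g) * (Y.submatrix id g)ᵀ := by
    have := congrArg Matrix.transpose (h.transpose.mul_submatrix g)
    rwa [transpose_mul, transpose_mul, transpose_transpose, diagonal_transpose] at this
  rw [Matrix.mul_sub, Matrix.sub_mul, Matrix.mul_one, Matrix.one_mul, ← Matrix.mul_assoc,
    h.mul_submatrix g, Matrix.mul_assoc, Matrix.mul_assoc, htranspose]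

lemma l2_opNorm_le (h : IsThinSVD A X σ Y) [DecidableEq q] {c : ℝ} (hc : 0 ≤ c)
    (hσ : ∀ i, σ i ≤ c) : ‖A‖ ≤ c := by
  have hX := l2_opNorm_le_one_of_transpose_mul_self h.left_orthonormal
  have hY := l2_opNorm_le_one_of_transpose_mul_self h.right_orthonormal
  rw [← l2_opNorm_transpose] at hY
  have hD : ‖diagonal σ‖ ≤ c := by
    rw [l2_opNorm_diagonal, pi_norm_le_iff_of_nonneg hc]
    exact fun i ↦ (Real.norm_of_nonneg (h.nonneg i)).trans_le (hσ i)
  calc ‖A‖ ≤ ‖X‖ * ‖diagonal σ‖ * ‖Yᵀ‖ := by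
        rw [h.eq_mul]
        exact (l2_opNorm_mul _ _).trans (by gcongr; exact l2_opNorm_mul _ _)
    _ ≤ 1 * c * 1 := by gcongr
    _ = c := by ring

lemma vnorm_sq_mulVec_sub_smul (h : IsThinSVD A X σ Y) [DecidableEq p] (τ : ℝ) (u : p → ℝ)
    (v : q → ℝ) :
    vnorm (A *ᵥ v - τ • u) ^ 2 = ∑ i, (σ i * (Yᵀ *ᵥ v) i - τ * (Xᵀ *ᵥ u) i) ^ 2 +
      τ ^ 2 * vnorm ((1 - X * Xᵀ) *ᵥ u) ^ 2 := by
  have hX := h.left_orthonormal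
  have hrange : (X * Xᵀ) *ᵥ (A *ᵥ v - τ • u) =
      X *ᵥ (diagonal σ *ᵥ (Yᵀ *ᵥ v) - τ • (Xᵀ *ᵥ u)) := by
    simp only [h.eq_mul, mulVec_sub, mulVec_smul, mulVec_mulVec, Matrix.mul_assoc]
    rw [← Matrix.mul_assoc Xᵀ, hX, Matrix.one_mul]
  have hperp : (1 - X * Xᵀ) *ᵥ (A *ᵥ v - τ • u) = (-τ) • (1 - X * Xᵀ) *ᵥ u := by
    have hzero : (1 - X * Xᵀ) * A = 0 := by
      rw [h.eq_mul, Matrix.mul_assoc, ← Matrix.mul_assoc, Matrix.sub_mul, Matrix.mul_assoc X, hX,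
        Matrix.one_mul, Matrix.mul_one, sub_self, Matrix.zero_mul]
    rw [mulVec_sub, mulVec_mulVec, hzero, zero_mulVec, zero_sub, mulVec_smul, neg_smul]
  rw [← vnorm_sq_mulVec_add_vnorm_sq_one_sub_mulVec (isStarProjection_one_sub_mul_transpose hX),
    sub_sub_cancel, hrange, hperp, vnorm_mulVec_of_transpose_mul_self hX, vnorm_smul, mul_pow,
    sq_abs, neg_sq, add_comm, vnorm_sq (_ - _)]
  simp only [mulVec_diagonal, Pi.sub_apply, Pi.smul_apply, smul_eq_mul]

lemma le_vnorm_jordanWielandt_sub_smul_one_mulVec (h : IsThinSVD A X σ Y) [DecidableEq p]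
    [DecidableEq q] {d τ : ℝ} (hd : 0 ≤ d) (hdτ : d ≤ τ) {u : p → ℝ} {v : q → ℝ}
    (hgap : ∀ i, d ≤ |σ i - τ| ∨ (Xᵀ *ᵥ u) i = 0 ∧ (Yᵀ *ᵥ v) i = 0) :
    d * vnorm (Sum.elim u v) ≤ vnorm ((jordanWielandt A - τ • 1) *ᵥ Sum.elim u v) := by
  set a := Xᵀ *ᵥ u
  set c := Yᵀ *ᵥ v
  have hcoord (i : k) : d ^ 2 * (a i ^ 2 + c i ^ 2) ≤
      (σ i * c i - τ * a i) ^ 2 + (σ i * a i - τ * c i) ^ 2 := by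
    rcases hgap i with hi | ⟨ha, hc⟩
    · calc d ^ 2 * (a i ^ 2 + c i ^ 2) ≤ |σ i - τ| ^ 2 * (a i ^ 2 + c i ^ 2) := by gcongr
        _ ≤ |σ i - τ| ^ 2 * (a i ^ 2 + c i ^ 2) + 2 * (σ i * τ) * (a i - c i) ^ 2 :=
          le_add_of_nonneg_right (mul_nonneg
            (mul_nonneg zero_le_two (mul_nonneg (h.nonneg i) (hd.trans hdτ))) (sq_nonneg _))
        _ = _ := by rw [sq_abs]; ring
    · rw [ha, hc]
      simp
  have hperp (x : ℝ) : d ^ 2 * x ^ 2 ≤ τ ^ 2 * x ^ 2 := by gcongr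
  rw [← sq_le_sq₀ (mul_nonneg hd (vnorm_nonneg _)) (vnorm_nonneg _), mul_pow]
  calc d ^ 2 * vnorm (Sum.elim u v) ^ 2
      = ∑ i, d ^ 2 * (a i ^ 2 + c i ^ 2) + (d ^ 2 * vnorm ((1 - X * Xᵀ) *ᵥ u) ^ 2 +
          d ^ 2 * vnorm ((1 - Y * Yᵀ) *ᵥ v) ^ 2) := by
        rw [vnorm_sumElim_sq, vnorm_sq_eq_sum_add h.left_orthonormal,
          vnorm_sq_eq_sum_add h.right_orthonormal, ← Finset.mul_sum, Finset.sum_add_distrib]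
        ring
    _ ≤ ∑ i, ((σ i * c i - τ * a i) ^ 2 + (σ i * a i - τ * c i) ^ 2) +
          (τ ^ 2 * vnorm ((1 - X * Xᵀ) *ᵥ u) ^ 2 + τ ^ 2 * vnorm ((1 - Y * Yᵀ) *ᵥ v) ^ 2) :=
        add_le_add (Finset.sum_le_sum fun i _ ↦ hcoord i) (add_le_add (hperp _) (hperp _))
    _ = vnorm ((jordanWielandt A - τ • 1) *ᵥ Sum.elim u v) ^ 2 := by
        rw [vnorm_sq_jordanWielandt_sub_smul_one_mulVec, h.vnorm_sq_mulVec_sub_smul,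
          h.transpose.vnorm_sq_mulVec_sub_smul, Finset.sum_add_distrib]
        ring

lemma le_vnorm_jordanWielandt_sub_smul_one_mulVec_of_deflated (h : IsThinSVD A X σ Y) [Fintype l]
    [DecidableEq p] [DecidableEq q] (g : l ↪ k) {d τ : ℝ} (hd : 0 ≤ d)
    (hdτ : d ≤ τ) (hgap : ∀ i ∉ Set.range g, d ≤ |σ i - τ|) {x : p ⊕ q → ℝ}
    (hx : fromBlocks (1 - X.submatrix id g * (X.submatrix id g)ᵀ) 0 0
      (1 - Y.submatrix id g * (Y.submatrix id g)ᵀ) *ᵥ x = x) :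
    d * vnorm x ≤ vnorm ((jordanWielandt A - τ • 1) *ᵥ x) := by
  classical
  obtain ⟨u, v, rfl⟩ : ∃ u v, x = Sum.elim u v := ⟨_, _, (Sum.elim_comp_inl_inr x).symm⟩
  rw [fromBlocks_mulVec, Sum.elim_comp_inl, Sum.elim_comp_inr, zero_mulVec, zero_mulVec, add_zero,
    zero_add, Sum.elim_eq_iff] at hx
  have hu := transpose_mulVec_eq_zero_of_one_sub_mulVec
    (transpose_submatrix_mul_submatrix h.left_orthonormal g) hx.1
  have hv := transpose_mulVec_eq_zero_of_one_sub_mulVec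
    (transpose_submatrix_mul_submatrix h.right_orthonormal g) hx.2
  refine h.le_vnorm_jordanWielandt_sub_smul_one_mulVec hd hdτ fun i ↦ ?_
  by_cases hi : i ∈ Set.range g
  · obtain ⟨j, rfl⟩ := hi
    exact Or.inr ⟨congrFun hu j, congrFun hv j⟩
  · exact Or.inl (hgap i hi)

end IsThinSVD

end ThinSVD

section DeflatedMinres

open scoped Matrix.Norms.L2Operator

lemma one_sub_two_div_one_add_div {a b : ℝ} (ha : 0 < a) (hb : 0 ≤ b) :
    1 - 2 / (1 + b / a) = (b - a) / (b + a) := by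
  field_simp
  ring

variable {p q k l : Type*} [Fintype p] [Fintype q] [DecidableEq p] [DecidableEq q]

lemma l2_opNorm_compression_sub_smul_one_le {P : Matrix p p ℝ} (hP : IsStarProjection P)
    (H : Matrix p p ℝ) {τ : ℝ} (hτ : 0 ≤ τ) : ‖P * (H - τ • 1) * P‖ ≤ ‖H‖ + τ := by
  have hle : ‖H - τ • (1 : Matrix p p ℝ)‖ ≤ ‖H‖ + τ := by
    refine norm_sub_le_of_le le_rfl ?_
    rw [norm_smul, Real.norm_of_nonneg hτ]
    exact mul_le_of_le_one_right hτ ((IsStarProjection.one (Matrix p p ℝ)).norm_le 1)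
  simpa only [one_mul, mul_one] using
    norm_mul_le_of_le (norm_mul_le_of_le (hP.norm_le P) hle) (hP.norm_le P)

variable [Fintype k] [Fintype l] [DecidableEq k] [DecidableEq l] {A : Matrix p q ℝ}
  {X : Matrix p k ℝ} {σ : k → ℝ} {Y : Matrix q k ℝ}

theorem minres_bound_precond_approx_interior_general (hA : IsThinSVD A X σ Y) (g : l ↪ k)
    {τ σmax d δ : ℝ} (hσmax : IsGreatest (Set.range σ) σmax)
    (hd : IsLeast ((fun i ↦ |σ i - τ|) '' (Set.range g)ᶜ) d) (hdτ : d ≤ τ)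
    {Ut : Matrix p l ℝ} {Vt : Matrix q l ℝ} (hUt : Utᵀ * Ut = 1) (hVt : Vtᵀ * Vt = 1)
    (hδ : δ = specNorm A * (specNorm ((1 - Ut * Utᵀ) * X.submatrix id g) +
      specNorm ((1 - Vt * Vtᵀ) * Y.submatrix id g)) ^ 2)
    (hδd : δ < d) {P : Matrix (p ⊕ q) (p ⊕ q) ℝ}
    (hP : P = fromBlocks (1 - Ut * Utᵀ) 0 0 (1 - Vt * Vtᵀ)) {r : p ⊕ q → ℝ} (hr : P *ᵥ r = r)
    (j : ℕ) :
    ∃ w ∈ Krylov (P * (jordanWielandt A - τ • 1) * P) r j,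
      vnorm ((P * (jordanWielandt A - τ • 1) * P) *ᵥ w + r) ≤
        2 * (1 - 2 / (1 + (σmax + τ + δ) / (d - δ))) ^ (j / 2) * vnorm r := by
  simp only [specNorm_eq_norm] at hδ
  have hσmax0 : 0 ≤ σmax := by
    obtain ⟨i, hi⟩ := hσmax.1
    exact hi ▸ hA.nonneg i
  have hδ0 : 0 ≤ δ := hδ ▸ mul_nonneg (norm_nonneg _) (sq_nonneg _)
  have hτ0 : 0 ≤ τ := hδ0.trans (hδd.le.trans hdτ)
  have hAσ : ‖A‖ ≤ σmax := hA.l2_opNorm_le hσmax0 fun i ↦ hσmax.2 ⟨i, rfl⟩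
  have hP₁ := isStarProjection_one_sub_mul_transpose hUt
  have hP₂ := isStarProjection_one_sub_mul_transpose hVt
  have hUg := transpose_submatrix_mul_submatrix hA.left_orthonormal g
  have hVg := transpose_submatrix_mul_submatrix hA.right_orthonormal g
  have hPproj : IsStarProjection P := hP ▸ isStarProjection_fromBlocks hP₁ hP₂
  have hPt := transpose_eq_self_of_isStarProjection hPproj
  rw [one_sub_two_div_one_add_div (sub_pos.2 hδd) (by positivity)]
  refine exists_mem_Krylov_vnorm_mulVec_add_le ?_ hPproj ?_ (sub_pos.2 hδd) (by linarith)
    (fun x hx ↦ ?_) ?_ hr j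
  · simp only [transpose_mul, transpose_sub, transpose_smul, transpose_one,
      jordanWielandt_transpose, hPt, mul_assoc]
  · rw [← mul_assoc, ← mul_assoc, hPproj.isIdempotentElem.eq]
  · subst hP
    refine le_trans (mul_le_mul_of_nonneg_right (sub_le_sub_left ?_ d) (vnorm_nonneg x))
      (le_vnorm_compression_mulVec hP₁ hP₂ (isStarProjection_one_sub_mul_transpose hUg)
        (isStarProjection_one_sub_mul_transpose hVg) (hA.mul_one_sub_submatrix_mul_transpose g) hdτ
        (fun y hy ↦ hA.le_vnorm_jordanWielandt_sub_smul_one_mulVec_of_deflated g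
          (hδ0.trans hδd.le) hdτ (fun i hi ↦ hd.2 ⟨i, hi, rfl⟩) hy) hx)
    rw [hδ]
    have hgap := add_le_add (norm_one_sub_mul_transpose_sub_le hUt hUg)
      (norm_one_sub_mul_transpose_sub_le hVt hVg)
    exact mul_le_mul_of_nonneg_left (pow_le_pow_left₀ (by positivity) hgap 2) (norm_nonneg A)
  · have hle := l2_opNorm_compression_sub_smul_one_le hPproj (jordanWielandt A) hτ0
    linarith [l2_opNorm_jordanWielandt_le A]

lemma le_of_isLeast_abs_sub_of_add_div_two_lt {ι : Type*} {σ : ι → ℝ} {T : Set ι} {τ c d e : ℝ}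
    (hσ : ∀ i, 0 ≤ σ i) (hclosest : ∀ i ∉ T, ∀ j ∈ T, |σ i - τ| ≤ |σ j - τ|)
    (hc : IsLeast (Set.range σ) c) (he : IsLeast (σ '' T) e) (hce : (c + e) / 2 < τ)
    (hd : IsLeast ((fun i ↦ |σ i - τ|) '' T) d) : d ≤ τ := by
  obtain ⟨⟨i, rfl⟩, -⟩ := hc
  obtain ⟨⟨j, hj, rfl⟩, hmin⟩ := he
  have hjτ : σ j < τ := by
    by_contra! hle
    by_cases hi : i ∈ T
    · linarith [hmin ⟨i, hi, rfl⟩]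
    · have hij := (neg_abs_le _).trans' (neg_le_neg (hclosest i hi j hj))
      rw [abs_of_nonneg (sub_nonneg.2 hle)] at hij
      linarith
  have hdj : d ≤ |σ j - τ| := hd.2 ⟨j, hj, rfl⟩
  rw [abs_of_neg (sub_neg.2 hjτ)] at hdj
  linarith [hσ j]

end DeflatedMinres

/-- Theorem 4.4(iii). MINRES bound for the preconditioned JDSVD
correction equation with approximate singular subspaces, in the interior case. -/
theorem minres_bound_precond_approx_interior {M N m : ℕ} (hN : 2 ≤ N) (hMN : N ≤ M)
    (hm : 1 ≤ m) (hmN : m < N)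
    (A : Matrix (Fin M) (Fin N) ℝ)
    (U : Matrix (Fin M) (Fin M) ℝ) (V : Matrix (Fin N) (Fin N) ℝ)
    (hU : Uᵀ * U = 1) (hV : Vᵀ * V = 1)
    (σ : Fin N → ℝ) (hσ : ∀ i, 0 ≤ σ i)
    (S : Matrix (Fin M) (Fin N) ℝ)
    (hS : ∀ i j, S i j = if (i : ℕ) = (j : ℕ) then σ j else 0)
    (hA : A = U * S * Vᵀ)
    (τ : ℝ) (hτ0 : 0 ≤ τ)
    (hclosest : ∀ i j : Fin N, (i : ℕ) < m → m ≤ (j : ℕ) → |σ i - τ| ≤ |σ j - τ|)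
    (hτσ : ∀ i : Fin N, τ ≠ σ i)
    (σmax σmaxm1 σmin σminm1 : ℝ)
    (hσmax : IsGreatest (Set.range σ) σmax)
    (hσmaxm1 : IsGreatest (σ '' {i : Fin N | m ≤ (i : ℕ)}) σmaxm1)
    (hσmin : IsLeast (Set.range σ) σmin)
    (hσminm1 : IsLeast (σ '' {i : Fin N | m ≤ (i : ℕ)}) σminm1)
    (hτ1 : (σmin + σminm1) / 2 < τ) (hτ2 : τ < (σmax + σmaxm1) / 2)
    (dm1 : ℝ)
    (hdm1 : IsLeast ((fun i => |σ i - τ|) '' {i : Fin N | m ≤ (i : ℕ)}) dm1)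
    (Um : Matrix (Fin M) (Fin m) ℝ)
    (hUm : ∀ i j, Um i j = U i ⟨(j : ℕ), by have := j.isLt; omega⟩)
    (Vm : Matrix (Fin N) (Fin m) ℝ)
    (hVm : ∀ i j, Vm i j = V i ⟨(j : ℕ), by have := j.isLt; omega⟩)
    (Ut : Matrix (Fin M) (Fin m) ℝ) (Vt : Matrix (Fin N) (Fin m) ℝ)
    (hUt : Utᵀ * Ut = 1) (hVt : Vtᵀ * Vt = 1)
    (δ : ℝ)
    (hδ : δ = specNorm A *
      (specNorm ((1 - Ut * Utᵀ) * Um) + specNorm ((1 - Vt * Vtᵀ) * Vm)) ^ 2)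
    (hδsmall : δ < dm1)
    (B P Bm : Matrix (Fin M ⊕ Fin N) (Fin M ⊕ Fin N) ℝ)
    (hB : B = Matrix.fromBlocks ((-τ) • 1) A Aᵀ ((-τ) • 1))
    (hP : P = Matrix.fromBlocks (1 - Ut * Utᵀ) 0 0 (1 - Vt * Vtᵀ))
    (hBm : Bm = P * B * P)
    (r : Fin M ⊕ Fin N → ℝ) (hr : P *ᵥ r = r) :
    ∀ j : ℕ, ∃ w ∈ Krylov Bm r j,
      vnorm (Bm *ᵥ w + r) ≤
        2 * (1 - 2 / (1 + (σmax + τ + δ) / (dm1 - δ))) ^ (j / 2) * vnorm r := by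
  have hSe (i j) : S i j = if i = Fin.castLEEmb hMN j then σ j else 0 := by
    simp only [hS, Fin.ext_iff, Fin.castLEEmb_apply, Fin.val_castLE]
  have hrange : (Set.range (Fin.castLEEmb hmN.le))ᶜ = {i : Fin N | m ≤ (i : ℕ)} := by
    ext i
    simp
  have hdτ : dm1 ≤ τ := le_of_isLeast_abs_sub_of_add_div_two_lt hσ
    (fun i hi j hj ↦ hclosest i j (not_le.1 hi) hj) hσmin hσminm1 hτ1 hdm1
  have hUmU : Um = (U.submatrix id (Fin.castLEEmb hMN)).submatrix id (Fin.castLEEmb hmN.le) :=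
    Matrix.ext hUm
  have hVmV : Vm = V.submatrix id (Fin.castLEEmb hmN.le) := Matrix.ext hVm
  rw [hBm, hB, ← jordanWielandt_sub_smul_one]
  exact minres_bound_precond_approx_interior_general (IsThinSVD.of_svd hU hV hσ _ hSe hA) _ hσmax
    (hrange ▸ hdm1) hdτ hUt hVt (hUmU ▸ hVmV ▸ hδ) hδsmall hP hr
end

section
/- Let A ∈ ℝ^{M×N}, τ ∈ ℝ, and let Ũ ∈ ℝ^{M×m} and Ṽ ∈ ℝ^{N×m} have orthonormal columns (ŨᵀŨ = I_m, ṼᵀṼ = I_m). Set Θ = Ũᵀ A Ṽ, B = [[−τ I_M, A], [Aᵀ, −τ I_N]], and Π = diag(I_M − ŨŨᵀ, I_N − ṼṼᵀ). Then for all s ∈ ℝ^M and t ∈ ℝ^N, Π B (s; t) = Π B Π (s; t) + r_tail, where r_tail ∈ ℝ^{M+N} has upper block (A Ṽ − Ũ Θ)(Ṽᵀ t) ∈ ℝ^M and lower block (Aᵀ Ũ − Ṽ Θᵀ)(Ũᵀ s) ∈ ℝ^N; in particular, when Θ is diagonal, r_tail = [[0, A Ṽ − Ũ Θ], [Aᵀ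 Ũ − Ṽ Θ, 0]] · (Ũᵀ s; Ṽᵀ t). -/
open Matrix

/-!
Put `W = diag(U, V)`, so that `P = 1 - W * Wᵀ`. Splitting `1 = P + W * Wᵀ` on the right of `P * B`
leaves the tail `P * B * W * Wᵀ`, and `P * B * W = B * W - W * (Wᵀ * B * W)` is the Galerkin
residual of `B` on the columns of `W`. This residual is computed block by block: the shift `-τ`
contributes nothing because the columns of `U` and `V` are reproduced by `U * Uᵀ` and `V * Vᵀ`,
and the off-diagonal blocks `A` and `Aᵀ` contribute the two residuals of the singular triplets.
-/

section BlockMatrix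

variable {R m n k l : Type*}

theorem fromBlocks_sub [Sub R]
    (A : Matrix m k R) (B : Matrix m l R) (C : Matrix n k R) (D : Matrix n l R)
    (A' : Matrix m k R) (B' : Matrix m l R) (C' : Matrix n k R) (D' : Matrix n l R) :
    fromBlocks A B C D - fromBlocks A' B' C' D' =
      fromBlocks (A - A') (B - B') (C - C') (D - D') := by
  ext (_ | _) (_ | _) <;> rfl

theorem one_sub_fromBlocks_mul_transpose [Ring R] [Fintype k] [Fintype l]
    [DecidableEq m] [DecidableEq n] (U : Matrix m k R) (V : Matrix n l R) :
    1 - fromBlocks U 0 0 V * (fromBlocks U 0 0 V)ᵀ =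
      fromBlocks (1 - U * Uᵀ) 0 0 (1 - V * Vᵀ) := by
  simp only [← fromBlocks_one, fromBlocks_transpose, fromBlocks_multiply, fromBlocks_sub,
    transpose_zero, Matrix.zero_mul, Matrix.mul_zero, add_zero, zero_add, sub_zero]

theorem fromBlocks_diagonal_mulVec_sumElim [NonUnitalNonAssocSemiring R] [Fintype k] [Fintype l]
    (A : Matrix m k R) (D : Matrix n l R) (x : k → R) (y : l → R) :
    fromBlocks A 0 0 D *ᵥ Sum.elim x y = Sum.elim (A *ᵥ x) (D *ᵥ y) := by
  simp only [fromBlocks_mulVec, Sum.elim_comp_inl, Sum.elim_comp_inr, zero_mulVec, add_zero,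
    zero_add]

theorem fromBlocks_antidiagonal_mulVec_sumElim [NonUnitalNonAssocSemiring R] [Fintype k]
    [Fintype l] (B : Matrix m l R) (C : Matrix n k R) (x : k → R) (y : l → R) :
    fromBlocks 0 B C 0 *ᵥ Sum.elim x y = Sum.elim (B *ᵥ y) (C *ᵥ x) := by
  simp only [fromBlocks_mulVec, Sum.elim_comp_inl, Sum.elim_comp_inr, zero_mulVec, add_zero,
    zero_add]

end BlockMatrix

section GalerkinResidual

variable {R m n p q k l k' l' : Type*}

/-- The residual `A * V - U * Θ` of the (Petrov–)Galerkin approximation of `A` with trial matrix `V`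
and test matrix `U`, where `Θ = Uᵀ * A * V` is the projected matrix. With `Θ` transposed it also
gives the residual of the left singular vectors, as `galerkinResidual Aᵀ V U`. -/
def galerkinResidual [Ring R] [Fintype m] [Fintype n] [Fintype k]
    (A : Matrix m n R) (U : Matrix m k R) (V : Matrix n l R) : Matrix m l R :=
  A * V - U * (Uᵀ * A * V)

theorem one_sub_mul_eq_add_galerkinResidual [Ring R] [Fintype m] [Fintype n] [Fintype k]
    [Fintype l] [DecidableEq m] [DecidableEq n]
    (A : Matrix m n R) (U : Matrix m k R) (V : Matrix n l R) :
    (1 - U * Uᵀ) * A =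
      (1 - U * Uᵀ) * A * (1 - V * Vᵀ) + galerkinResidual A U V * Vᵀ := by
  have residual_eq : galerkinResidual A U V = (1 - U * Uᵀ) * A * V := by
    simp only [galerkinResidual, Matrix.sub_mul, Matrix.one_mul, Matrix.mul_assoc]
  rw [residual_eq, Matrix.mul_assoc _ V, ← Matrix.mul_add, sub_add_cancel, Matrix.mul_one]

theorem galerkinResidual_transpose [CommRing R] [Fintype m] [Fintype n] [Fintype l]
    (A : Matrix m n R) (U : Matrix m k R) (V : Matrix n l R) :
    galerkinResidual Aᵀ V U = Aᵀ * U - V * (Uᵀ * A * V)ᵀ := by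
  simp only [galerkinResidual, transpose_mul, transpose_transpose, Matrix.mul_assoc]

theorem galerkinResidual_smul_one [CommRing R] [Fintype m] [Fintype k] [DecidableEq m]
    {U : Matrix m k R} (hU : U * Uᵀ * U = U) (c : R) :
    galerkinResidual (c • 1) U U = 0 := by
  simp only [galerkinResidual, Matrix.smul_mul, Matrix.mul_smul, Matrix.one_mul, Matrix.mul_one,
    ← Matrix.mul_assoc, hU, sub_self]

theorem galerkinResidual_fromBlocks [Ring R] [Fintype m] [Fintype n] [Fintype p] [Fintype q]
    [Fintype k] [Fintype l]
    (A : Matrix m p R) (B : Matrix m q R) (C : Matrix n p R) (D : Matrix n q R)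
    (U : Matrix m k R) (V : Matrix n l R) (U' : Matrix p k' R) (V' : Matrix q l' R) :
    galerkinResidual (fromBlocks A B C D) (fromBlocks U 0 0 V) (fromBlocks U' 0 0 V') =
      fromBlocks (galerkinResidual A U U') (galerkinResidual B U V')
        (galerkinResidual C V U') (galerkinResidual D V V') := by
  simp only [galerkinResidual, fromBlocks_transpose, fromBlocks_multiply, fromBlocks_sub,
    transpose_zero, Matrix.zero_mul, Matrix.mul_zero, add_zero, zero_add]

theorem galerkinResidual_fromBlocks_smul_one [CommRing R] [Fintype m] [Fintype n] [Fintype k]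
    [Fintype l] [DecidableEq m] [DecidableEq n]
    (A : Matrix m n R) (C : Matrix n m R) {U : Matrix m k R} {V : Matrix n l R}
    (hU : U * Uᵀ * U = U) (hV : V * Vᵀ * V = V) (a b : R) :
    galerkinResidual (fromBlocks (a • 1) A C (b • 1)) (fromBlocks U 0 0 V) (fromBlocks U 0 0 V) =
      fromBlocks 0 (galerkinResidual A U V) (galerkinResidual C V U) 0 := by
  rw [galerkinResidual_fromBlocks, galerkinResidual_smul_one hU, galerkinResidual_smul_one hV]

end GalerkinResidual

theorem mul_transpose_mul_self_of_transpose_mul_self_eq_one {R m k : Type*} [Semiring R]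
    [Fintype m] [Fintype k] [DecidableEq k] {U : Matrix m k R} (hU : Uᵀ * U = 1) :
    U * Uᵀ * U = U := by
  rw [Matrix.mul_assoc, hU, Matrix.mul_one]

theorem rtail_identity_general {R m n k l : Type*} [CommRing R] [Fintype m] [Fintype n]
    [Fintype k] [Fintype l] [DecidableEq m] [DecidableEq n]
    (A : Matrix m n R) (τ : R) (U : Matrix m k R) (V : Matrix n l R)
    (hU : U * Uᵀ * U = U) (hV : V * Vᵀ * V = V)
    (Θ : Matrix k l R) (hΘ : Θ = Uᵀ * A * V)
    (B P : Matrix (m ⊕ n) (m ⊕ n) R)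
    (hB : B = fromBlocks ((-τ) • 1) A Aᵀ ((-τ) • 1))
    (hP : P = fromBlocks (1 - U * Uᵀ) 0 0 (1 - V * Vᵀ)) (s : m → R) (t : n → R) :
    P *ᵥ (B *ᵥ Sum.elim s t) =
        P *ᵥ (B *ᵥ (P *ᵥ Sum.elim s t)) +
          Sum.elim ((A * V - U * Θ) *ᵥ (Vᵀ *ᵥ t)) ((Aᵀ * U - V * Θᵀ) *ᵥ (Uᵀ *ᵥ s)) ∧
      Sum.elim ((A * V - U * Θ) *ᵥ (Vᵀ *ᵥ t)) ((Aᵀ * U - V * Θᵀ) *ᵥ (Uᵀ *ᵥ s)) =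
        fromBlocks 0 (A * V - U * Θ) (Aᵀ * U - V * Θᵀ) 0 *ᵥ
          Sum.elim (Uᵀ *ᵥ s) (Vᵀ *ᵥ t) := by
  set W := fromBlocks U 0 0 V with hW
  have projection_eq : P = 1 - W * Wᵀ := by rw [hP, one_sub_fromBlocks_mul_transpose]
  have residual_eq :
      galerkinResidual B W W = fromBlocks 0 (A * V - U * Θ) (Aᵀ * U - V * Θᵀ) 0 := by
    rw [hB, hΘ, galerkinResidual_fromBlocks_smul_one A Aᵀ hU hV, galerkinResidual_transpose,
      galerkinResidual]
  have coordinates_eq : Wᵀ *ᵥ Sum.elim s t = Sum.elim (Uᵀ *ᵥ s) (Vᵀ *ᵥ t) := by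
    rw [hW, fromBlocks_transpose, transpose_zero, transpose_zero,
      fromBlocks_diagonal_mulVec_sumElim]
  have rtail_eq := fromBlocks_antidiagonal_mulVec_sumElim (A * V - U * Θ) (Aᵀ * U - V * Θᵀ)
    (Uᵀ *ᵥ s) (Vᵀ *ᵥ t)
  refine ⟨?_, rtail_eq.symm⟩
  calc P *ᵥ (B *ᵥ Sum.elim s t)
      = (P * B * P + galerkinResidual B W W * Wᵀ) *ᵥ Sum.elim s t := by
        rw [mulVec_mulVec, projection_eq, ← one_sub_mul_eq_add_galerkinResidual]
    _ = P *ᵥ (B *ᵥ (P *ᵥ Sum.elim s t)) + galerkinResidual B W W *ᵥ (Wᵀ *ᵥ Sum.elim s t) := by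
        simp only [add_mulVec, mulVec_mulVec, Matrix.mul_assoc]
    _ = _ := by rw [residual_eq, coordinates_eq, rtail_eq]

/-- equations (4.5)–(4.7). The discrepancy `r_tail` between the one-sided
projected system and the two-sided projected system in the derivation of the preconditioned
JDSVD correction equation. -/
theorem rtail_identity {M N m : ℕ}
    (A : Matrix (Fin M) (Fin N) ℝ) (τ : ℝ)
    (Ut : Matrix (Fin M) (Fin m) ℝ) (Vt : Matrix (Fin N) (Fin m) ℝ)
    (hUt : Utᵀ * Ut = 1) (hVt : Vtᵀ * Vt = 1)
    (Θ : Matrix (Fin m) (Fin m) ℝ) (hΘ : Θ = Utᵀ * A * Vt)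
    (B P : Matrix (Fin M ⊕ Fin N) (Fin M ⊕ Fin N) ℝ)
    (hB : B = Matrix.fromBlocks ((-τ) • 1) A Aᵀ ((-τ) • 1))
    (hP : P = Matrix.fromBlocks (1 - Ut * Utᵀ) 0 0 (1 - Vt * Vtᵀ)) :
    ∀ (s : Fin M → ℝ) (t : Fin N → ℝ),
      P *ᵥ (B *ᵥ Sum.elim s t) =
        P *ᵥ (B *ᵥ (P *ᵥ Sum.elim s t)) +
          Sum.elim ((A * Vt - Ut * Θ) *ᵥ (Vtᵀ *ᵥ t)) ((Aᵀ * Ut - Vt * Θᵀ) *ᵥ (Utᵀ *ᵥ s)) ∧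
      ((∀ i j : Fin m, i ≠ j → Θ i j = 0) →
        Sum.elim ((A * Vt - Ut * Θ) *ᵥ (Vtᵀ *ᵥ t)) ((Aᵀ * Ut - Vt * Θᵀ) *ᵥ (Utᵀ *ᵥ s)) =
          (Matrix.fromBlocks (0 : Matrix (Fin M) (Fin m) ℝ) (A * Vt - Ut * Θ)
              (Aᵀ * Ut - Vt * Θ) (0 : Matrix (Fin N) (Fin m) ℝ)) *ᵥ
            Sum.elim (Utᵀ *ᵥ s) (Vtᵀ *ᵥ t)) := by
  intro s t
  obtain ⟨split, rtail_eq⟩ := rtail_identity_general A τ Ut Vt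
    (mul_transpose_mul_self_of_transpose_mul_self_eq_one hUt)
    (mul_transpose_mul_self_of_transpose_mul_self_eq_one hVt) Θ hΘ B P hB hP s t
  exact ⟨split, fun hdiag => by rw [rtail_eq, (IsDiag.isSymm fun i j => hdiag i j).eq]⟩
end
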